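/- Let S(l,r) be the signed double star consisting of a positive central edge z₁z₂, together with l positive pendant edges z₁v₁,…,z₁v_l and two negative pendant edges z₁u₁, z₁u₂ attached at z₁, and r positive pendant edges z₂w₁,…,z₂w_r attached at z₂ (so S(l,r) is a (l+r+4, l+r+1, 2) signed graph). If l ≥ 2, r ≥ 2, and r is even, then S(l,r) is additively graceful. -/

import Mathlib

/-- A signed graph on vertex type `V`: a finite set of positive edges and a
finite set of negative edges, disjoint from one another, with no loops. -/
structure SignedGraph (V : Type) [DecidableEq V] where
  posEdges : Finset (Sym2 V)
  negEdges : Finset (Sym2 V)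
  disjoint : Disjoint posEdges negEdges
  pos_not_diag : ∀ e ∈ posEdges, ¬ e.IsDiag
  neg_not_diag : ∀ e ∈ negEdges, ¬ e.IsDiag

/-- Induced label on a positive edge: `|f u - f v|`. -/
def posLabel {V : Type} (f : V → ℕ) : Sym2 V → ℕ :=
  Sym2.lift ⟨fun u v => Nat.dist (f u) (f v), fun u v => Nat.dist_comm _ _⟩

/-- Induced label on a negative edge: `f u + f v`. -/
def negLabel {V : Type} (f : V → ℕ) : Sym2 V → ℕ :=
  Sym2.lift ⟨fun u v => f u + f v, fun u v => Nat.add_comm _ _⟩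

/-- `f` is an additively graceful labeling of the signed graph `S`:
it is an injection into `{0, 1, …, m + ⌈(n+1)/2⌉}` whose induced labels on the
positive edges are exactly `{1, …, m}` and on the negative edges exactly
`{1, …, n}`, where `m` (resp. `n`) is the number of positive (negative) edges.
(Note that `⌈(n+1)/2⌉ = (n+2)/2` with natural-number division.) -/
def IsAddGraceful {V : Type} [DecidableEq V] (S : SignedGraph V) (f : V → ℕ) : Prop :=
  Function.Injective f ∧
  (∀ v : V, f v ≤ S.posEdges.card + (S.negEdges.card + 2) / 2) ∧
  S.posEdges.image (posLabel f) = Finset.Icc 1 S.posEdges.card ∧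
  S.negEdges.image (negLabel f) = Finset.Icc 1 S.negEdges.card

/-- Vertex type of a double star: the two centers `z₁, z₂`, the `a` positive
pendant neighbours and `b` negative pendant neighbours of `z₁`, and the `c`
positive pendant neighbours of `z₂`. -/
abbrev DSV (a b c : ℕ) : Type := (Unit ⊕ Unit) ⊕ (Fin a ⊕ Fin b ⊕ Fin c)

/-- the first central vertex `z₁` -/
def z1 {a b c : ℕ} : DSV a b c := Sum.inl (Sum.inl ())
/-- the second central vertex `z₂` -/
def z2 {a b c : ℕ} : DSV a b c := Sum.inl (Sum.inr ())
/-- the end `vᵢ` of the `i`-th positive pendant edge at `z₁` -/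
def vv {a b c : ℕ} (i : Fin a) : DSV a b c := Sum.inr (Sum.inl i)
/-- the end `uᵢ` of the `i`-th negative pendant edge at `z₁` -/
def uu {a b c : ℕ} (i : Fin b) : DSV a b c := Sum.inr (Sum.inr (Sum.inl i))
/-- the end `wᵢ` of the `i`-th positive pendant edge at `z₂` -/
def ww {a b c : ℕ} (i : Fin c) : DSV a b c := Sum.inr (Sum.inr (Sum.inr i))

/-- The signed double star with a *positive* central edge `z₁z₂`,
`a` positive and `b` negative pendant edges at `z₁`, and `c` positive pendant
edges at `z₂`. -/
def doubleStarPos (a b c : ℕ) : SignedGraph (DSV a b c) where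
  posEdges :=
    {s(z1, z2)} ∪ Finset.univ.image (fun i : Fin a => s(z1, vv i)) ∪
      Finset.univ.image (fun i : Fin c => s(z2, ww i))
  negEdges := Finset.univ.image (fun i : Fin b => s(z1, uu i))
  disjoint := by
    rw [Finset.disjoint_left]
    intro e he1 he2
    simp only [Finset.mem_union, Finset.mem_singleton, Finset.mem_image,
      Finset.mem_univ, true_and] at he1 he2
    obtain ⟨j, rfl⟩ := he2
    rcases he1 with (h | ⟨i, h⟩) | ⟨i, h⟩ <;>
      simp [z1, z2, vv, uu, ww, Sym2.eq_iff] at h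
  pos_not_diag := by
    intro e he
    simp only [Finset.mem_union, Finset.mem_singleton, Finset.mem_image,
      Finset.mem_univ, true_and] at he
    rcases he with (rfl | ⟨i, rfl⟩) | ⟨i, rfl⟩ <;>
      simp [z1, z2, vv, ww, Sym2.mk_isDiag_iff]
  neg_not_diag := by
    intro e he
    simp only [Finset.mem_image, Finset.mem_univ, true_and] at he
    obtain ⟨i, rfl⟩ := he
    simp [z1, uu, Sym2.mk_isDiag_iff]

/-- The explicit labeling, with `r = 2 * k + 2` and `m = l + 2 * k + 3`. -/
def dsLab (l k r : ℕ) : DSV l 2 r → ℕ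
  | Sum.inl (Sum.inl _) => 0
  | Sum.inl (Sum.inr _) => l + 2 * k + 3
  | Sum.inr (Sum.inl i) => if i.1 + 2 < l then k + 3 + i.1 else i.1 + 2 * k + 3
  | Sum.inr (Sum.inr (Sum.inl i)) => i.1 + 1
  | Sum.inr (Sum.inr (Sum.inr i)) =>
      if i.1 < k then i.1 + 3
      else if i.1 < 2 * k then l + 3 * k - i.1
      else l + 4 + i.1

theorem dsLab_inj (l k r : ℕ) (hl : 2 ≤ l) (hk : r = 2 * k + 2) :
    Function.Injective (dsLab l k r) := by
  rintro ((⟨⟩ | ⟨⟩) | (i | i | i)) ((⟨⟩ | ⟨⟩) | (j | j | j)) h <;>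
    simp only [dsLab] at h <;> first
    | rfl
    | (exfalso; have := i.2; have := j.2; split_ifs at h <;> omega)
    | (exfalso; have := i.2; split_ifs at h <;> omega)
    | (exfalso; have := j.2; split_ifs at h <;> omega)
    | (exfalso; have := i.2; omega)
    | (exfalso; have := j.2; omega)
    | (exfalso; omega)
    | (have : i = j := by
        have := i.2
        have := j.2
        apply Fin.ext
        first
          | omega
          | (split_ifs at h <;> omega)
       rw [this])

theorem ds_pos_image (l k r : ℕ) (hl : 2 ≤ l) (hk : r = 2 * k + 2) :
    (doubleStarPos l 2 r).posEdges.image (posLabel (dsLab l k r)) = Finset.Icc 1 (l + r + 1) := by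
  ext x
  simp only [doubleStarPos, Finset.mem_image, Finset.mem_union, Finset.mem_singleton,
    Finset.mem_univ, true_and, Finset.mem_Icc]
  constructor
  · rintro ⟨e, (rfl | ⟨i, rfl⟩) | ⟨i, rfl⟩, rfl⟩
    · simp only [posLabel, Sym2.lift_mk, z1, z2, dsLab, Nat.dist]
      omega
    · have := i.2
      simp only [posLabel, Sym2.lift_mk, z1, vv, dsLab, Nat.dist]
      split_ifs <;> omega
    · have := i.2
      simp only [posLabel, Sym2.lift_mk, z2, ww, dsLab, Nat.dist]
      split_ifs <;> omega
  · rintro ⟨h1, h2⟩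
    have key : x = l + 2 * k + 3 ∨
        (∃ i : Fin l, (if i.1 + 2 < l then k + 3 + i.1 else i.1 + 2 * k + 3) = x) ∨
        (∃ i : Fin r, Nat.dist (l + 2 * k + 3) (if i.1 < k then i.1 + 3
          else if i.1 < 2 * k then l + 3 * k - i.1 else l + 4 + i.1) = x) := by
      by_cases c0 : x = l + 2 * k + 3
      · exact Or.inl c0
      right
      by_cases c1 : l + 2 * k + 1 ≤ x
      · left
        refine ⟨⟨x - 2 * k - 3, by omega⟩, ?_⟩
        dsimp only
        split_ifs <;> omega
      by_cases c2 : x ≤ 2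
      · right
        refine ⟨⟨2 * k + x - 1, by omega⟩, ?_⟩
        simp only [Nat.dist]
        split_ifs <;> omega
      by_cases c3 : x < k + 3
      · right
        refine ⟨⟨k + x - 3, by omega⟩, ?_⟩
        simp only [Nat.dist]
        split_ifs <;> omega
      by_cases c4 : x < l + k + 1
      · left
        refine ⟨⟨x - k - 3, by omega⟩, ?_⟩
        dsimp only
        split_ifs <;> omega
      · right
        refine ⟨⟨l + 2 * k - x, by omega⟩, ?_⟩
        simp only [Nat.dist]
        split_ifs <;> omega
    rcases key with h | ⟨i, h⟩ | ⟨i, h⟩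
    · refine ⟨_, Or.inl (Or.inl rfl), ?_⟩
      simp only [posLabel, Sym2.lift_mk, z1, z2, dsLab, Nat.dist]
      omega
    · refine ⟨_, Or.inl (Or.inr ⟨i, rfl⟩), ?_⟩
      simp only [posLabel, Sym2.lift_mk, z1, vv, dsLab, Nat.dist]
      omega
    · exact ⟨_, Or.inr ⟨i, rfl⟩, h⟩

theorem ds_neg_image (l k r : ℕ) :
    (doubleStarPos l 2 r).negEdges.image (negLabel (dsLab l k r)) = Finset.Icc 1 2 := by
  ext x
  simp only [doubleStarPos, Finset.mem_image, Finset.mem_univ, true_and, Finset.mem_Icc]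
  constructor
  · rintro ⟨e, ⟨i, rfl⟩, rfl⟩
    have := i.2
    simp only [negLabel, Sym2.lift_mk, z1, uu, dsLab]
    omega
  · rintro ⟨h1, h2⟩
    refine ⟨_, ⟨⟨x - 1, by omega⟩, rfl⟩, ?_⟩
    simp only [negLabel, Sym2.lift_mk, z1, uu, dsLab]
    omega

theorem ds_pos_card (l k r : ℕ) (hl : 2 ≤ l) (hk : r = 2 * k + 2) :
    (doubleStarPos l 2 r).posEdges.card = l + r + 1 := by
  apply le_antisymm
  · have h1 := Finset.card_image_le (s := (Finset.univ : Finset (Fin l)))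
      (f := fun i => (s(z1, vv i) : Sym2 (DSV l 2 r)))
    have h2 := Finset.card_image_le (s := (Finset.univ : Finset (Fin r)))
      (f := fun i => (s(z2, ww i) : Sym2 (DSV l 2 r)))
    simp only [Finset.card_univ, Fintype.card_fin] at h1 h2
    simp only [doubleStarPos]
    refine (Finset.card_union_le _ _).trans ?_
    refine (Nat.add_le_add_right (Finset.card_union_le _ _) _).trans ?_
    rw [Finset.card_singleton]
    omega
  · have h := Finset.card_image_le (s := (doubleStarPos l 2 r).posEdges)
      (f := posLabel (dsLab l k r))
    rw [ds_pos_image l k r hl hk, Nat.card_Icc] at h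
    omega

theorem ds_neg_card (l k r : ℕ) : (doubleStarPos l 2 r).negEdges.card = 2 := by
  apply le_antisymm
  · have h1 := Finset.card_image_le (s := (Finset.univ : Finset (Fin 2)))
      (f := fun i => (s(z1, uu i) : Sym2 (DSV l 2 r)))
    simp only [Finset.card_univ, Fintype.card_fin] at h1
    exact h1
  · have h := Finset.card_image_le (s := (doubleStarPos l 2 r).negEdges)
      (f := negLabel (dsLab l k r))
    rw [ds_neg_image l k r, Nat.card_Icc] at h
    omega

/-- The signed double star with positive central edge `z₁z₂`,
`l` positive and `2` negative pendant edges at `z₁`, and `r` positive pendant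
edges at `z₂`, is additively graceful when `l ≥ 2`, `r ≥ 2` and `r` is even. -/
theorem doubleStar_twoNeg_addGraceful_of_even_r (l r : ℕ) (hl : 2 ≤ l) (hr : 2 ≤ r)
    (hre : Even r) :
    ∃ f : DSV l 2 r → ℕ, IsAddGraceful (doubleStarPos l 2 r) f := by
  obtain ⟨t, ht⟩ := hre
  obtain ⟨k, hk⟩ : ∃ k, r = 2 * k + 2 := ⟨t - 1, by omega⟩
  refine ⟨dsLab l k r, dsLab_inj l k r hl hk, ?_, ?_, ?_⟩
  · rw [ds_pos_card l k r hl hk, ds_neg_card l k r]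
    rintro ((⟨⟩ | ⟨⟩) | (i | i | i)) <;> simp only [dsLab]
    · omega
    · omega
    · have := i.2
      split_ifs <;> omega
    · have := i.2
      omega
    · have := i.2
      split_ifs <;> omega
  · rw [ds_pos_card l k r hl hk, ds_pos_image l k r hl hk]
  · rw [ds_neg_card l k r, ds_neg_image l k r]
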